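/- arXiv:2304.11804 — 2 statements merged into one kernel-verified Lean document; each statement's English description precedes it below -/
import Mathlib

section
/- Let k be a positive natural number, let M be the 4×4 integer matrix with rows (1, −3, −1, −1), (0, 1, 0, 0), (0, 0, 1, 0), (0, 0, 0, 1), and let f : (Fin 4 → ℤ) → (Fin 4 → ℤ) be the linear map determined by the matrix M^k − 1. Then the quotient additive group (Fin 4 → ℤ) ⧸ range(f) is isomorphic, as an additive group, to ZMod k × (ℤ × ℤ × ℤ). -/
/-!
The matrix `M` is the transvection `x ↦ x + f x • e₀` for a surjective linear form `f` that kills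
`e₀`. Hence `M ^ k - 1` is `x ↦ f x • (k • e₀)`, whose range is the line spanned by `k • e₀`, and
dividing by that line replaces the zeroth coordinate `ℤ` by `ℤ / k`.
-/

open LinearMap Module Submodule

section Transvection

variable {R V : Type*}

theorem transvection_pow [Semiring R] [AddCommMonoid V] [Module R V] {f : Dual R V} {v : V}
    (hfv : f v = 0) (n : ℕ) : transvection f v ^ n = transvection f (n • v) := by
  induction n with
  | zero => simp [Module.End.one_eq_id]
  | succ n ih =>
    rw [pow_succ, ih, Module.End.mul_eq_comp, transvection.comp_of_left_eq hfv, succ_nsmul]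

variable [Ring R] [AddCommGroup V] [Module R V] {f : Dual R V} {v : V}

theorem transvection_pow_sub_one (hfv : f v = 0) (n : ℕ) :
    transvection f v ^ n - 1 = f.smulRight (n • v) := by
  ext x
  simp [transvection_pow hfv, transvection.apply]

theorem range_transvection_pow_sub_one (hfv : f v = 0) (hf : Function.Surjective f) (n : ℕ) :
    range (transvection f v ^ n - 1) = span R {n • v} := by
  rw [transvection_pow_sub_one hfv, range_smulRight_apply_of_surjective hf]

end Transvection

section QuotientSpan

variable {R : Type*} [Ring R] (n : ℕ) (a : R)

/-- The map `R ^ (n + 1) → R / (a) × R ^ n` reducing the zeroth coordinate modulo `a`. -/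
def reduceZerothCoord : (Fin (n + 1) → R) →ₗ[R] (R ⧸ Ideal.span {a}) × (Fin n → R) :=
  ((mkQ (Ideal.span {a})).comp (proj 0)).prod (funLeft R R Fin.succ)

theorem reduceZerothCoord_surjective : Function.Surjective (reduceZerothCoord n a) := by
  rintro ⟨q, w⟩
  obtain ⟨r, rfl⟩ := mkQ_surjective _ q
  exact ⟨Fin.cons r w, rfl⟩

theorem ker_reduceZerothCoord :
    ker (reduceZerothCoord n a) = span R {Pi.single 0 a} := by
  ext v
  have mem_ker_iff :
      v ∈ ker (reduceZerothCoord n a) ↔ v 0 ∈ Ideal.span {a} ∧ ∀ i : Fin n, v i.succ = 0 := by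
    simp [reduceZerothCoord, funext_iff, funLeft_apply, Submodule.Quotient.mk_eq_zero]
  rw [mem_ker_iff]
  simp [Ideal.mem_span_singleton', mem_span_singleton, funext_iff, Fin.forall_fin_succ,
    eq_comm (a := (0 : R))]

/-- Dividing `R ^ (n + 1)` by the multiples of `a • e₀` only affects the zeroth coordinate. -/
noncomputable def quotientSpanSingleZeroEquiv :
    ((Fin (n + 1) → R) ⧸ span R {(Pi.single 0 a : Fin (n + 1) → R)}) ≃ₗ[R]
      (R ⧸ Ideal.span {a}) × (Fin n → R) :=
  (quotEquivOfEq _ _ (ker_reduceZerothCoord n a).symm).trans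
    ((reduceZerothCoord n a).quotKerEquivOfSurjective (reduceZerothCoord_surjective n a))

end QuotientSpan

/-- The linear form `f` for which `x ↦ x + f x • e₀` is the map of the matrix `M`: the zeroth row
of `M - 1`. -/
def twistForm : Dual ℤ (Fin 4 → ℤ) :=
  -3 • proj 1 - proj 2 - proj 3

theorem twistForm_single_zero : twistForm (Pi.single 0 1) = 0 := by
  simp [twistForm]

theorem twistForm_surjective : Function.Surjective twistForm := fun c ↦
  ⟨Pi.single 3 (-c), by simp [twistForm]⟩

theorem toLin'_eq_transvection_twistForm :
    Matrix.toLin' !![1, -3, -1, -1; 0, 1, 0, 0; 0, 0, 1, 0; 0, 0, 0, 1] =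
      transvection twistForm (Pi.single 0 1) := by
  ext j i
  fin_cases j <;> fin_cases i <;> simp [twistForm, transvection.apply]

/-- For a positive natural number `k`, with `M` the 4×4 integer matrix with rows
`(1, −3, −1, −1)`, `(0, 1, 0, 0)`, `(0, 0, 1, 0)`, `(0, 0, 0, 1)`, the quotient of `Fin 4 → ℤ`
by the range of the linear map given by the matrix `M ^ k - 1` is isomorphic, as an additive
group, to `ZMod k × (ℤ × ℤ × ℤ)`. -/
theorem quotient_range_pow_sub_one_four (k : ℕ) (hk : 0 < k) :
    Nonempty
      (((Fin 4 → ℤ) ⧸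
          LinearMap.range (Matrix.toLin'
            ((!![1, -3, -1, -1; 0, 1, 0, 0; 0, 0, 1, 0; 0, 0, 0, 1] :
                Matrix (Fin 4) (Fin 4) ℤ) ^ k - 1))) ≃+
        (ZMod k × (ℤ × ℤ × ℤ))) := by
  have range_eq : range (Matrix.toLin'
      ((!![1, -3, -1, -1; 0, 1, 0, 0; 0, 0, 1, 0; 0, 0, 0, 1] :
        Matrix (Fin 4) (Fin 4) ℤ) ^ k - 1)) = span ℤ {Pi.single 0 (k : ℤ)} := by
    rw [map_sub, Matrix.toLin'_pow, Matrix.toLin'_one, toLin'_eq_transvection_twistForm,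
      ← Module.End.one_eq_id,
      range_transvection_pow_sub_one twistForm_single_zero twistForm_surjective,
      ← Pi.single_smul, nsmul_one]
  have tripleEquiv : (Fin 3 → ℤ) ≃ₗ[ℤ] ℤ × ℤ × ℤ := .ofFinrankEq _ _ (by simp)
  exact ⟨(quotEquivOfEq _ _ range_eq).toAddEquiv.trans <|
    (quotientSpanSingleZeroEquiv 3 (k : ℤ)).toAddEquiv.trans <|
    (Int.quotientSpanNatEquivZMod k).toAddEquiv.prodCongr tripleEquiv.toAddEquiv⟩
end

section
/- Let A = !![8, 3; -3, -1] be the 2×2 integer matrix with rows (8, 3) and (−3, −1). Then the function k ↦ |det(A^k − 1)| (natural absolute value of the determinant over ℤ) is strictly monotone increasing on the positive integers, and |det(A^k − 1)| tends to infinity as k → ∞. -/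
open Filter

/-!
For a `2 × 2` matrix `A` of determinant one, `det (A ^ k - 1) = 2 - tr (A ^ k)`, and by
Cayley–Hamilton the traces `t k = tr (A ^ k)` satisfy `t (k + 2) = tr A * t (k + 1) - t k`.
The increments thus satisfy
`t (k + 2) - t (k + 1) = (t (k + 1) - t k) + (tr A - 2) * t (k + 1)`; when `tr A > 2` they stay
positive, starting from `t 1 - t 0 = tr A - 2`.
-/

section CommRing

variable {R : Type*} [CommRing R]

theorem det_sub_one_fin_two (A : Matrix (Fin 2) (Fin 2) R) :
    (A - 1).det = A.det - A.trace + 1 := by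
  simp only [Matrix.det_fin_two, Matrix.trace_fin_two, Matrix.sub_apply, Matrix.one_apply_eq,
    Matrix.one_apply_ne zero_ne_one, Matrix.one_apply_ne one_ne_zero]
  ring

theorem sq_eq_trace_smul_sub_det_smul_one_fin_two (A : Matrix (Fin 2) (Fin 2) R) :
    A ^ 2 = A.trace • A - A.det • 1 := by
  nontriviality R
  have cayley_hamilton := A.aeval_self_charpoly
  simp only [Matrix.charpoly_fin_two, map_add, map_sub, map_mul, map_pow, Polynomial.aeval_X,
    Polynomial.aeval_C, Algebra.algebraMap_eq_smul_one, smul_one_mul] at cayley_hamilton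
  rw [eq_sub_iff_add_eq, ← sub_eq_zero, ← cayley_hamilton]
  abel

theorem trace_pow_add_two_fin_two (A : Matrix (Fin 2) (Fin 2) R) (k : ℕ) :
    (A ^ (k + 2)).trace = A.trace * (A ^ (k + 1)).trace - A.det * (A ^ k).trace := by
  rw [pow_add, sq_eq_trace_smul_sub_det_smul_one_fin_two, mul_sub, mul_smul_comm, mul_smul_comm,
    mul_one, ← pow_succ, Matrix.trace_sub, Matrix.trace_smul, Matrix.trace_smul, smul_eq_mul,
    smul_eq_mul]

theorem det_pow_sub_one_eq_two_sub_trace_pow {A : Matrix (Fin 2) (Fin 2) R} (hdet : A.det = 1)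
    (k : ℕ) : (A ^ k - 1).det = 2 - (A ^ k).trace := by
  rw [det_sub_one_fin_two, Matrix.det_pow, hdet, one_pow]
  ring

end CommRing

section LinearOrder

variable {R : Type*} [CommRing R] [LinearOrder R] [IsStrictOrderedRing R]
  {A : Matrix (Fin 2) (Fin 2) R}

theorem two_le_trace_pow_and_trace_pow_lt_succ (hdet : A.det = 1) (htrace : 2 < A.trace) (k : ℕ) :
    2 ≤ (A ^ k).trace ∧ (A ^ k).trace < (A ^ (k + 1)).trace := by
  induction k with
  | zero => simpa [Matrix.trace_one] using htrace
  | succ k ih =>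
    obtain ⟨two_le, lt_succ⟩ := ih
    have two_lt : 2 < (A ^ (k + 1)).trace := two_le.trans_lt lt_succ
    refine ⟨two_lt.le, ?_⟩
    calc (A ^ (k + 1)).trace
        < 2 * (A ^ (k + 1)).trace - (A ^ k).trace := by linarith
      _ ≤ A.trace * (A ^ (k + 1)).trace - (A ^ k).trace := by gcongr
      _ = (A ^ (k + 2)).trace := by rw [trace_pow_add_two_fin_two, hdet, one_mul]

theorem strictMono_trace_pow (hdet : A.det = 1) (htrace : 2 < A.trace) :
    StrictMono fun k : ℕ => (A ^ k).trace :=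
  strictMono_nat_of_lt_succ fun k => (two_le_trace_pow_and_trace_pow_lt_succ hdet htrace k).2

theorem strictAnti_det_pow_sub_one (hdet : A.det = 1) (htrace : 2 < A.trace) :
    StrictAnti fun k : ℕ => (A ^ k - 1).det := by
  simp only [det_pow_sub_one_eq_two_sub_trace_pow hdet]
  exact fun _ _ hkl => sub_lt_sub_left (strictMono_trace_pow hdet htrace hkl) 2

end LinearOrder

theorem natAbs_det_pow_sub_one_strictMonoOn_and_tendsto_atTop_general
    {A : Matrix (Fin 2) (Fin 2) ℤ} (hdet : A.det = 1) (htrace : 2 < A.trace) :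
    StrictMono (fun k : ℕ => (A ^ k - 1).det.natAbs) ∧
    Tendsto (fun k : ℕ => (A ^ k - 1).det.natAbs) atTop atTop := by
  have anti := strictAnti_det_pow_sub_one hdet htrace
  have nonpos (k : ℕ) : (A ^ k - 1).det ≤ 0 := by
    simpa [Matrix.det_zero] using anti.antitone k.zero_le
  have mono : StrictMono fun k : ℕ => (A ^ k - 1).det.natAbs := fun k l hkl =>
    Int.strictAntiOn_natAbs (nonpos l) (nonpos k) (anti hkl)
  exact ⟨mono, mono.tendsto_atTop⟩

/-- For `A = !![8, 3; -3, -1]` over `ℤ`, the function `k ↦ |det (A ^ k - 1)|` is strictly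
monotone on the positive integers, and tends to infinity as `k → ∞`. -/
theorem natAbs_det_pow_sub_one_strictMonoOn_and_tendsto_atTop :
    StrictMonoOn
      (fun k : ℕ => (((!![8, 3; -3, -1] : Matrix (Fin 2) (Fin 2) ℤ) ^ k - 1).det).natAbs)
      (Set.Ici 1) ∧
    Tendsto
      (fun k : ℕ => (((!![8, 3; -3, -1] : Matrix (Fin 2) (Fin 2) ℤ) ^ k - 1).det).natAbs)
      atTop atTop :=
  (natAbs_det_pow_sub_one_strictMonoOn_and_tendsto_atTop_general
    (by norm_num [Matrix.det_fin_two]) (by norm_num [Matrix.trace_fin_two])).imp_left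
      fun mono => mono.strictMonoOn _
end
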